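/- arXiv:1608.03499 — 2 statements merged into one kernel-verified Lean document; each statement's English description precedes it below -/
import Mathlib

section
/- Let n ≥ 4 be even and char k ≠ 2, and let φ_1, …, φ_N (N = 2^{c_{n−1}}) be ℤ₂-twistings such that the φ_i(I_n) are pairwise distinct and J_n = ∩_{i=1}^N φ_i(I_n). Then for every l ∈ {1,…,N}: ∩_{i ≠ l} φ_i(I_n) = J_n + ⟨ φ_l(p^+_n) ⟩, a single additional generator; moreover p^+_n is V_n-homogeneous of V_n-degree (n−2,…,n−2) and of total degree n(n−2)/2. -/
open scoped BigOperators

namespace Veronese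

open MvPolynomial

/-- `c m = C(m,2)`. -/
def c (m : ℕ) : ℕ := m.choose 2

variable (n : ℕ)

/-- multiplicity (as ℤ) of the index `i` in the unordered pair `s`. -/
def wt (s : Sym2 (Fin n)) : Fin n → ℤ :=
  Sym2.lift ⟨fun a b i => (if i = a then 1 else 0) + (if i = b then 1 else 0),
    fun a b => funext fun i => add_comm _ _⟩ s

/-- The Veronese grading map `V_n : ℤ^P → ℤ^n`, sending `e_{ij} ↦ e_i + e_j`. -/
def Vmap : (Sym2 (Fin n) → ℤ) →ₗ[ℤ] (Fin n → ℤ) where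
  toFun u := fun i => ∑ s : Sym2 (Fin n), u s * wt n s i
  map_add' u v := funext fun i => by
    simp [add_mul, Finset.sum_add_distrib]
  map_smul' m u := funext fun i => by
    simp [Finset.mul_sum, smul_eq_mul, mul_assoc]

/-- The Veronese lattice `L_n = ker V_n`. -/
def Llat : Submodule ℤ (Sym2 (Fin n) → ℤ) := LinearMap.ker (Vmap n)

/-- standard basis vector `e_{ij}` of `ℤ^P`. -/
def e (i j : Fin n) : Sym2 (Fin n) → ℤ := Pi.single s(i, j) 1

lemma e_comm (i j : Fin n) : e n i j = e n j i := by
  unfold e; rw [Sym2.eq_swap]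

/-- `[ij|ij] = e_{ii} + e_{jj} - 2 e_{ij}`. -/
def minorVec (i j : Fin n) : Sym2 (Fin n) → ℤ := e n i i + e n j j - 2 • e n i j

/-- The principal minor lattice `L'_n`. -/
def L'lat : Submodule ℤ (Sym2 (Fin n) → ℤ) :=
  Submodule.span ℤ {v | ∃ i j : Fin n, i < j ∧ v = minorVec n i j}

/-- the last index `n` (zero-based: `n-1`) of `Fin n`. -/
def lastIdx (hn : 0 < n) : Fin n := ⟨n - 1, Nat.sub_lt hn one_pos⟩

/-- embedding `[n-1] → [n]`. -/
def ι : Fin (n - 1) → Fin n := Fin.castLE (Nat.sub_le n 1)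

/-- `[in|jn] = e_{ij} + e_{nn} - e_{in} - e_{jn}` for `i,j ∈ [n-1]`. -/
def Bvec (hn : 0 < n) : Sym2 (Fin (n - 1)) → (Sym2 (Fin n) → ℤ) :=
  Sym2.lift ⟨fun i j =>
      e n (ι n i) (ι n j) + e n (lastIdx n hn) (lastIdx n hn)
        - e n (ι n i) (lastIdx n hn) - e n (ι n j) (lastIdx n hn),
    fun i j => by dsimp only; rw [e_comm n (ι n i) (ι n j)]; ring⟩

/-- The family `B'`: `[in|in]` on the diagonal, `2[in|jn]` off it. -/
noncomputable def B'vec (hn : 0 < n) (s : Sym2 (Fin (n - 1))) : Sym2 (Fin n) → ℤ :=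
  if s.IsDiag then Bvec n hn s else 2 • Bvec n hn s

/-- multiplicity (as ℕ) of the index `i` in the unordered pair `s`. -/
def wtN (s : Sym2 (Fin n)) : Fin n → ℕ :=
  Sym2.lift ⟨fun a b i => (if i = a then 1 else 0) + (if i = b then 1 else 0),
    fun a b => funext fun i => add_comm _ _⟩ s

/-- The Veronese degree of an exponent vector `u ∈ ℕ^P`. -/
def VN (u : Sym2 (Fin n) →₀ ℕ) : Fin n → ℕ := fun i => ∑ s : Sym2 (Fin n), u s * wtN n s i

/-- The fiber `V_n^{-1}[b] = {u ∈ ℕ^P : V_n u = b}`. -/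
def fiber (b : Fin n → ℕ) : Set (Sym2 (Fin n) →₀ ℕ) := {u | VN n u = b}

/-- natural inclusion `ℕ^P → ℤ^P`. -/
def toZ (u : Sym2 (Fin n) →₀ ℕ) : Sym2 (Fin n) → ℤ := fun s => (u s : ℤ)

lemma fiber_finite (b : Fin n → ℕ) : (fiber n b).Finite := by
  classical
  have hsub : fiber n b ⊆
      ↑(Finset.Iic ((Finsupp.equivFunOnFinite.symm fun _ => ∑ i, b i) : Sym2 (Fin n) →₀ ℕ)) := by
    intro u hu
    simp only [Finset.coe_Iic, Set.mem_Iic, Finsupp.le_def]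
    intro s
    induction s using Sym2.ind with
    | _ i j =>
      have h1 : u s(i, j) * wtN n s(i, j) i ≤ VN n u i :=
        Finset.single_le_sum (f := fun s => u s * wtN n s i)
          (fun s _ => Nat.zero_le _) (Finset.mem_univ s(i, j))
      have h2 : 1 ≤ wtN n s(i, j) i := by
        simp only [wtN, Sym2.lift_mk, if_pos rfl]
        exact Nat.le_add_right 1 _
      have h3 : u s(i, j) ≤ b i := by
        have hb : VN n u i = b i := congrFun hu i
        calc u s(i, j) ≤ u s(i, j) * wtN n s(i, j) i := Nat.le_mul_of_pos_right _ h2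
          _ ≤ VN n u i := h1
          _ = b i := hb
      calc u s(i, j) ≤ b i := h3
        _ ≤ ∑ i, b i := Finset.single_le_sum (fun _ _ => Nat.zero_le _) (Finset.mem_univ _)
        _ = (Finsupp.equivFunOnFinite.symm fun _ => ∑ i, b i) s(i, j) := by
            simp
  exact Set.Finite.subset (Finset.finite_toSet _) hsub

variable (k : Type*) [Field k]

/-- the polynomial ring `k[x_{ij}]`. -/
abbrev R := MvPolynomial (Sym2 (Fin n)) k

/-- The principal minor ideal `J_n`. -/
noncomputable def Jideal : Ideal (R n k) :=
  Ideal.span {f | ∃ i j : Fin n, i < j ∧ f = X s(i, i) * X s(j, j) - X s(i, j) ^ 2}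

/-- The map `x_{ij} ↦ t_i t_j`. -/
noncomputable def veroHom : R n k →ₐ[k] MvPolynomial (Fin n) k :=
  aeval fun s => Sym2.lift ⟨fun a b => X a * X b, fun a b => mul_comm _ _⟩ s

/-- The second Veronese ideal `I_n`. -/
noncomputable def Iideal : Ideal (R n k) := RingHom.ker (veroHom n k)

/-- A ℤ₂-twisting: an automorphism sending each variable to ± itself. -/
def IsTwisting (φ : R n k ≃ₐ[k] R n k) : Prop :=
  ∀ s : Sym2 (Fin n), φ (X s) = X s ∨ φ (X s) = - X s

/-- `f` is V_n-homogeneous of degree `b`. -/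
def VHomog (f : R n k) (b : Fin n → ℕ) : Prop := ∀ u ∈ f.support, VN n u = b

/-- The fiber over `b` as a finite set. -/
noncomputable def fiberFinset (b : Fin n → ℕ) : Finset (Sym2 (Fin n) →₀ ℕ) :=
  (fiber_finite n b).toFinset

/-- generating function of the canonical (0/1 off-diagonal) representatives of
the fiber over `b`. -/
noncomputable def pplusAt (b : Fin n → ℕ) : R n k :=
  ∑ u ∈ (fiberFinset n b).filter (fun u => ∀ s : Sym2 (Fin n), ¬s.IsDiag → u s ≤ 1),
    monomial u (1 : k)

/-- `p⁺_{n,j}` (for `n` odd): fiber over `(n-2,…,n-2) + e_j`. -/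
noncomputable def pplusOdd (j : Fin n) : R n k :=
  pplusAt n k fun i => (n - 2) + if i = j then 1 else 0

/-- `p⁺_n` (for `n` even): fiber over `(n-2,…,n-2)`. -/
noncomputable def pplusEven : R n k :=
  pplusAt n k fun _ => n - 2

/-- `p_n = ∏_{i<j∈[n-1]} (x_{ij} x_{nn} + x_{in} x_{jn})`. -/
noncomputable def pn (hn : 0 < n) : R n k :=
  ∏ p ∈ Finset.univ.filter (fun p : Fin (n - 1) × Fin (n - 1) => p.1 < p.2),
    (X s(ι n p.1, ι n p.2) * X s(lastIdx n hn, lastIdx n hn)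
      + X s(ι n p.1, lastIdx n hn) * X s(ι n p.2, lastIdx n hn))



section Aux

lemma wtN_mk (a b i : Fin n) :
    wtN n s(a, b) i = (if i = a then 1 else 0) + (if i = b then 1 else 0) := rfl

lemma VN_eq (u : Sym2 (Fin n) →₀ ℕ) (i : Fin n) :
    VN n u i = ∑ j, u s(i, j) * (if j = i then 2 else 1) := by
  classical
  unfold VN
  symm
  apply Finset.sum_of_injOn (fun j => s(i, j))
  · intro a _ b _ h
    rcases Sym2.eq_iff.1 h with h | h
    · exact h.2
    · exact h.2.trans h.1
  · intro _ _; simp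
  · intro s _ hs
    induction s using Sym2.ind with
    | _ a b =>
      rw [wtN_mk]
      have h1 : i ≠ a := by
        rintro rfl
        exact hs ⟨b, by simp, rfl⟩
      have h2 : i ≠ b := by
        rintro rfl
        exact hs ⟨a, by simp, Sym2.eq_swap⟩
      simp [h1, h2]
  · intro j _
    rw [wtN_mk]
    by_cases h : j = i
    · simp [h]
    · simp [h, Ne.symm h]

lemma VN_sum (u : Sym2 (Fin n) →₀ ℕ) : ∑ i, VN n u i = 2 * ∑ s, u s := by
  unfold VN
  rw [Finset.sum_comm, Finset.mul_sum]
  refine Finset.sum_congr rfl fun s _ => ?_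
  rw [← Finset.mul_sum, mul_comm]
  congr 1
  induction s using Sym2.ind with
  | _ a b => simp [wtN_mk, Finset.sum_add_distrib]

lemma VN_add (u v : Sym2 (Fin n) →₀ ℕ) (i : Fin n) :
    VN n (u + v) i = VN n u i + VN n v i := by
  simp [VN, add_mul, Finset.sum_add_distrib]

/-- the Veronese degree as a finitely supported function -/
noncomputable def VF (u : Sym2 (Fin n) →₀ ℕ) : Fin n →₀ ℕ :=
  Finsupp.equivFunOnFinite.symm (VN n u)

lemma VF_apply (u : Sym2 (Fin n) →₀ ℕ) (i : Fin n) : VF n u i = VN n u i := rfl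

/-- sign of a monomial under a twisting -/
def sgn (ε : Sym2 (Fin n) → ℤˣ) (u : Sym2 (Fin n) →₀ ℕ) : ℤˣ := ∏ s, ε s ^ u s

lemma sgn_add (ε : Sym2 (Fin n) → ℤˣ) (u v : Sym2 (Fin n) →₀ ℕ) :
    sgn n ε (u + v) = sgn n ε u * sgn n ε v := by
  simp [sgn, pow_add, Finset.prod_mul_distrib]

lemma sgn_mul (ε δ : Sym2 (Fin n) → ℤˣ) (u : Sym2 (Fin n) →₀ ℕ) :
    sgn n (ε * δ) u = sgn n ε u * sgn n δ u := by
  simp [sgn, mul_pow, Finset.prod_mul_distrib]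

/-- cast of signs -/
def uc (x : ℤˣ) : k := ((x : ℤ) : k)

lemma uc_mul (x y : ℤˣ) : uc k (x * y) = uc k x * uc k y := by simp [uc]
lemma uc_one : uc k 1 = 1 := by simp [uc]
lemma uc_neg_one : uc k (-1) = -1 := by simp [uc]
lemma uc_pow (x : ℤˣ) (m : ℕ) : uc k (x ^ m) = uc k x ^ m := by simp [uc]
lemma uc_prod {α : Type*} (T : Finset α) (f : α → ℤˣ) :
    uc k (∏ s ∈ T, f s) = ∏ s ∈ T, uc k (f s) := by
  classical
  induction T using Finset.induction_on with
  | empty => simp [uc_one]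
  | insert a T ha ih => rw [Finset.prod_insert ha, Finset.prod_insert ha, uc_mul, ih]
lemma uc_ne_zero (x : ℤˣ) : uc k x ≠ 0 := by
  rcases Int.units_eq_one_or x with h | h <;> simp [h, uc]

/-- the twisted Veronese map -/
noncomputable def Psi (ε : Sym2 (Fin n) → ℤˣ) : R n k →ₐ[k] MvPolynomial (Fin n) k :=
  aeval fun s => monomial (VF n (Finsupp.single s 1)) (uc k (ε s))

lemma prod_monomial {α β : Type*} (T : Finset α) (f : α → (β →₀ ℕ)) (g : α → k) :
    ∏ s ∈ T, monomial (f s) (g s) = monomial (∑ s ∈ T, f s) (∏ s ∈ T, g s) := by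
  classical
  induction T using Finset.induction_on with
  | empty => simp
  | insert a T ha ih =>
    rw [Finset.prod_insert ha, Finset.prod_insert ha, Finset.sum_insert ha, ih, monomial_mul]

lemma Psi_monomial (ε : Sym2 (Fin n) → ℤˣ) (u : Sym2 (Fin n) →₀ ℕ) (a : k) :
    Psi n k ε (monomial u a) = monomial (VF n u) (uc k (sgn n ε u) * a) := by
  classical
  rw [Psi, aeval_monomial, Finsupp.prod_fintype _ _ (by simp)]
  simp only [monomial_pow]
  rw [prod_monomial, algebraMap_eq, C_mul_monomial, sgn, uc_prod, mul_comm]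
  simp only [uc_pow]
  congr 2
  apply Finsupp.ext
  intro i
  simp only [Finsupp.coe_finsetSum, Finset.sum_apply, Finsupp.smul_apply, VF_apply, VN,
    Finsupp.single_apply, smul_eq_mul, ite_mul, one_mul, zero_mul, Finset.sum_ite_eq,
    Finset.mem_univ, if_true]

lemma Psi_one : Psi n k 1 = veroHom n k := by
  apply MvPolynomial.algHom_ext
  intro s
  rw [Psi, veroHom, aeval_X, aeval_X]
  induction s using Sym2.ind with
  | _ a b =>
    simp only [Pi.one_apply, uc_one, Sym2.lift_mk]
    rw [X, X, monomial_mul, one_mul]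
    congr 2
    apply Finsupp.ext
    intro i
    classical
    simp [VF_apply, VN, Finsupp.single_apply, wtN_mk, eq_comm]

lemma coeff_Psi (ε : Sym2 (Fin n) → ℤˣ) (f : R n k) (b : Fin n →₀ ℕ) :
    coeff b (Psi n k ε f) =
      ∑ u ∈ f.support, if VF n u = b then uc k (sgn n ε u) * coeff u f else 0 := by
  classical
  conv_lhs => rw [f.as_sum]
  rw [map_sum, coeff_sum]
  refine Finset.sum_congr rfl fun u _ => ?_
  rw [Psi_monomial, coeff_monomial]

variable {n k}

/-- the sign vector of a twisting -/
lemma exists_sign {φ : R n k ≃ₐ[k] R n k} (h : IsTwisting n k φ) :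
    ∃ ε : Sym2 (Fin n) → ℤˣ, ∀ s, φ (X s) = C (uc k (ε s)) * X s := by
  have : ∀ s, ∃ x : ℤˣ, φ (X s) = C (uc k x) * X s := by
    intro s
    rcases h s with h | h
    · exact ⟨1, by simp [h, uc_one]⟩
    · exact ⟨-1, by simp [h, uc_neg_one]⟩
  choose ε hε using this
  exact ⟨ε, hε⟩

lemma Psi_comp {φ : R n k ≃ₐ[k] R n k} {ε : Sym2 (Fin n) → ℤˣ}
    (h : ∀ s, φ (X s) = C (uc k (ε s)) * X s) (δ : Sym2 (Fin n) → ℤˣ) (f : R n k) :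
    Psi n k δ (φ f) = Psi n k (δ * ε) f := by
  have : (Psi n k δ).comp φ.toAlgHom = Psi n k (δ * ε) := by
    apply MvPolynomial.algHom_ext
    intro s
    simp [h, Psi, uc_mul, C_mul_monomial, mul_comm, ← algebraMap_eq]
  exact DFunLike.congr_fun this f

lemma twist_twist {φ : R n k ≃ₐ[k] R n k} {ε : Sym2 (Fin n) → ℤˣ}
    (h : ∀ s, φ (X s) = C (uc k (ε s)) * X s) (f : R n k) : φ (φ f) = f := by
  have : φ.toAlgHom.comp φ.toAlgHom = AlgHom.id k _ := by
    apply MvPolynomial.algHom_ext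
    intro s
    have h2 : φ (C (uc k (ε s))) = C (uc k (ε s)) := φ.commutes _
    change φ (φ (X s)) = X s
    rw [h, map_mul, h, h2, ← mul_assoc, ← C_mul, ← uc_mul, Int.units_mul_self, uc_one]
    simp
  exact DFunLike.congr_fun this f

lemma mem_map_iff {φ : R n k ≃ₐ[k] R n k} {ε : Sym2 (Fin n) → ℤˣ}
    (h : ∀ s, φ (X s) = C (uc k (ε s)) * X s) (f : R n k) :
    f ∈ Ideal.map φ.toAlgHom (Iideal n k) ↔ Psi n k ε f = 0 := by
  have h1 : Psi n k ε f = veroHom n k (φ f) := by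
    rw [← Psi_one, Psi_comp h, one_mul]
  rw [h1]
  constructor
  · intro hf
    have : Ideal.map φ.toAlgHom (Iideal n k) ≤
        RingHom.ker ((veroHom n k).comp φ.toAlgHom) := by
      rw [Ideal.map_le_iff_le_comap]
      intro g hg
      rw [Ideal.mem_comap, RingHom.mem_ker]
      have : φ (φ g) = g := twist_twist h g
      change veroHom n k (φ (φ g)) = 0
      rw [this]
      exact hg
    exact this hf
  · intro hf
    rw [← twist_twist h f]
    exact Ideal.mem_map_of_mem φ.toAlgHom (I := Iideal n k) (x := φ f) hf

end Aux

section Comb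

variable {n}

/-- the pairs of distinct indices avoiding `L` -/
def SL (L : Fin n) : Finset (Sym2 (Fin n)) :=
  Finset.univ.filter fun s => ¬ s.IsDiag ∧ L ∉ s

lemma mem_SL {L : Fin n} {s : Sym2 (Fin n)} : s ∈ SL L ↔ ¬ s.IsDiag ∧ L ∉ s := by
  simp [SL]

lemma mk_mem_SL {L a b : Fin n} : s(a, b) ∈ SL L ↔ a ≠ b ∧ a ≠ L ∧ b ≠ L := by
  rw [mem_SL]
  simp [eq_comm]

lemma card_SL (L : Fin n) : (SL L).card = (n - 1).choose 2 := by
  classical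
  have h1 : Fintype.card {s : Sym2 {x : Fin n // x ≠ L} // ¬ s.IsDiag} = (n - 1).choose 2 := by
    rw [Sym2.card_subtype_not_diag]
    simp
  rw [← h1, Fintype.card_subtype]
  symm
  apply Finset.card_bij (fun s _ => Sym2.map Subtype.val s)
  · intro s hs
    induction s using Sym2.ind with
    | _ a b =>
      rw [Sym2.map_mk, mk_mem_SL]
      refine ⟨?_, a.2, b.2⟩
      simpa [Subtype.ext_iff] using hs
  · intro s _ t _ h
    exact Sym2.map.injective Subtype.val_injective h
  · intro s hs
    induction s using Sym2.ind with
    | _ a b =>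
      rw [mk_mem_SL] at hs
      refine ⟨s(⟨a, hs.2.1⟩, ⟨b, hs.2.2⟩), ?_, rfl⟩
      simpa using hs.1

lemma star_even {L : Fin n} {u : Sym2 (Fin n) →₀ ℕ} (hu : ∀ s ∈ SL L, Even (u s))
    (hV : ∀ a, Even (VN n u a)) (a b : Fin n) (hab : a ≠ b) : Even (u s(a, b)) := by
  have key : ∀ a, a ≠ L → Even (u s(a, L)) := by
    intro a ha
    have h := hV a
    rw [VN_eq, ← Finset.add_sum_erase _ _ (Finset.mem_univ L), if_neg (Ne.symm ha), mul_one] at h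
    refine (Nat.even_add.1 h).2 ?_
    rw [even_iff_two_dvd]
    apply Finset.dvd_sum
    intro j hj
    by_cases hja : j = a
    · simp [hja]
    · rw [if_neg hja, mul_one, ← even_iff_two_dvd]
      exact hu _ (mk_mem_SL.2 ⟨Ne.symm hja, ha, (Finset.mem_erase.1 hj).1⟩)
  by_cases ha : a = L
  · subst ha
    rw [Sym2.eq_swap]
    exact key b (Ne.symm hab)
  by_cases hb : b = L
  · subst hb
    exact key a ha
  exact hu _ (mk_mem_SL.2 ⟨hab, ha, hb⟩)

lemma extension (L : Fin n) (σ : Sym2 (Fin n) → ℕ) (hσ : ∀ s, σ s ≤ 1) (b : Fin n → ℕ)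
    (hb : Even (∑ i, b i)) :
    ∃ G : Sym2 (Fin n) →₀ ℕ, (∀ a, G s(a, a) = 0) ∧ (∀ s, G s ≤ 1) ∧ (∀ s ∈ SL L, G s = σ s) ∧
      ∀ a, Even (VN n G a + b a) := by
  classical
  let p : Fin n → ℕ := fun a =>
    (b a + ∑ j ∈ Finset.univ.erase L, if j = a then 0 else σ s(a, j)) % 2
  let g : Fin n → Fin n → ℕ := fun i j =>
    if i = j then 0 else if i = L then p j else if j = L then p i else σ s(i, j)
  have hg : ∀ i j, g i j = g j i := by
    intro i j
    simp only [g]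
    by_cases h1 : i = j
    · simp [h1]
    · rw [if_neg h1, if_neg (Ne.symm h1)]
      by_cases h2 : i = L
      · have h3 : j ≠ L := fun h => h1 (h2.trans h.symm)
        simp [h2, h3]
      · by_cases h3 : j = L
        · simp [h2, h3]
        · simp [h2, h3, Sym2.eq_swap]
  let G : Sym2 (Fin n) →₀ ℕ := Finsupp.equivFunOnFinite.symm (Sym2.lift ⟨g, hg⟩)
  have hG : ∀ i j, G s(i, j) = g i j := fun i j => rfl
  have hne : ∀ a, a ≠ L → Even (VN n G a + b a) := by
    intro a ha
    rw [VN_eq, ← Finset.add_sum_erase _ _ (Finset.mem_univ L), if_neg (Ne.symm ha), mul_one, hG]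
    have h1 : g a L = p a := by simp [g, ha]
    have h2 : ∑ j ∈ Finset.univ.erase L, G s(a, j) * (if j = a then 2 else 1) =
        ∑ j ∈ Finset.univ.erase L, if j = a then 0 else σ s(a, j) := by
      refine Finset.sum_congr rfl fun j hj => ?_
      have hj := (Finset.mem_erase.1 hj).1
      rw [hG]
      by_cases hja : j = a
      · simp [g, hja]
      · simp [g, hja, hj, ha, Ne.symm hja]
    rw [h1, h2]
    simp only [p]
    rw [Nat.even_iff]
    omega
  refine ⟨G, fun a => by simp [hG, g], ?_, ?_, ?_⟩
  · intro s
    induction s using Sym2.ind with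
    | _ i j =>
      rw [hG]
      simp only [g]
      have := hσ s(i, j)
      have h1 : p i ≤ 1 := by simp only [p]; omega
      have h2 : p j ≤ 1 := by simp only [p]; omega
      split_ifs <;> omega
  · intro s hs
    induction s using Sym2.ind with
    | _ i j =>
      rw [mk_mem_SL] at hs
      rw [hG]
      simp [g, hs]
  · intro a
    by_cases ha : a = L
    · subst ha
      have h1 : Even (∑ i, (VN n G i + b i)) := by
        rw [Finset.sum_add_distrib, VN_sum]
        exact (even_two_mul _).add hb
      rw [← Finset.add_sum_erase _ _ (Finset.mem_univ a)] at h1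
      refine (Nat.even_add.1 h1).2 ?_
      rw [even_iff_two_dvd]
      apply Finset.dvd_sum
      intro j hj
      rw [← even_iff_two_dvd]
      exact hne j (Finset.mem_erase.1 hj).1
    · exact hne a ha

lemma bigG (hn : 4 ≤ n) (b : Fin n → ℕ) (hb : Even (∑ i, b i)) (i₀ : Fin n) :
    ∃ G : Sym2 (Fin n) →₀ ℕ, (∀ a, G s(a, a) = 0) ∧ (∀ s, G s ≤ 1) ∧
      (∀ a, Even (VN n G a + b a)) ∧ n - 2 ≤ VN n G i₀ := by
  classical
  have : Nontrivial (Fin n) := Fin.nontrivial_iff_two_le.2 (by omega)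
  obtain ⟨L, hL⟩ := exists_ne i₀
  obtain ⟨G, h1, h2, h3, h4⟩ := extension L (fun _ => 1) (fun _ => le_rfl) b hb
  refine ⟨G, h1, h2, h4, ?_⟩
  rw [VN_eq]
  calc n - 2 = ((Finset.univ.erase L).erase i₀).card := by
        rw [Finset.card_erase_of_mem (by simp [Ne.symm hL]), Finset.card_erase_of_mem (by simp)]
        simp; omega
    _ = ∑ j ∈ (Finset.univ.erase L).erase i₀, 1 := by simp
    _ = ∑ j ∈ (Finset.univ.erase L).erase i₀, G s(i₀, j) * (if j = i₀ then 2 else 1) := by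
        refine Finset.sum_congr rfl fun j hj => ?_
        simp only [Finset.mem_erase, Finset.mem_univ, and_true] at hj
        rw [if_neg hj.1, h3 _ (mk_mem_SL.2 ⟨Ne.symm hj.1, Ne.symm hL, hj.2⟩)]
    _ ≤ _ := Finset.sum_le_sum_of_subset (Finset.subset_univ _)

lemma VN_mono_offdiag {G u : Sym2 (Fin n) →₀ ℕ} (h : ∀ s, G s ≤ u s) (i : Fin n) :
    VN n G i ≤ VN n u i := by
  unfold VN
  exact Finset.sum_le_sum fun s _ => Nat.mul_le_mul_right _ (h s)

lemma VN_single (s : Sym2 (Fin n)) (i : Fin n) : VN n (Finsupp.single s 1) i = wtN n s i := by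
  classical
  simp [VN, Finsupp.single_apply]

lemma exists_VN (m : ℕ) : ∀ c : Fin n → ℕ, ∑ i, c i = 2 * m →
    ∃ w : Sym2 (Fin n) →₀ ℕ, VN n w = c := by
  classical
  induction m with
  | zero =>
    intro c hc
    refine ⟨0, ?_⟩
    funext i
    have : c i = 0 := by
      simp at hc
      exact hc i
    simp [VN, this]
  | succ m ih =>
    intro c hc
    have step : ∀ c : Fin n → ℕ, ∑ i, c i ≠ 0 → ∃ (i : Fin n) (c' : Fin n → ℕ), c = c' + Pi.single i 1 := by
      intro c hc
      obtain ⟨i, -, hi⟩ := Finset.exists_ne_zero_of_sum_ne_zero hc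
      refine ⟨i, c - Pi.single i 1, ?_⟩
      funext j
      by_cases h : j = i
      · subst h
        simp; omega
      · simp [h]
    obtain ⟨i, c', rfl⟩ := step c (by omega)
    simp only [Pi.add_apply, Finset.sum_add_distrib, Finset.sum_pi_single', Finset.mem_univ,
      if_true] at hc
    obtain ⟨j, c'', rfl⟩ := step c' (by omega)
    simp only [Pi.add_apply, Finset.sum_add_distrib, Finset.sum_pi_single', Finset.mem_univ,
      if_true] at hc
    obtain ⟨w, rfl⟩ := ih c'' (by omega)
    refine ⟨w + Finsupp.single s(i, j) 1, ?_⟩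
    funext a
    rw [VN_add, VN_single, wtN_mk]
    simp [Pi.single_apply]
    ring

/-- canonical representatives -/
noncomputable def canon (n : ℕ) : Finset (Sym2 (Fin n) →₀ ℕ) :=
  (fiberFinset n fun _ => n - 2).filter (fun u => ∀ s : Sym2 (Fin n), ¬s.IsDiag → u s ≤ 1)

lemma mem_canon {u : Sym2 (Fin n) →₀ ℕ} :
    u ∈ canon n ↔ (∀ a, VN n u a = n - 2) ∧ ∀ s : Sym2 (Fin n), ¬s.IsDiag → u s ≤ 1 := by
  simp [canon, fiberFinset, fiber, funext_iff]

lemma canon_surj (hn : 4 ≤ n) (heven : Even n) (L : Fin n) (σ : Sym2 (Fin n) → ℕ)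
    (hσ : ∀ s, σ s ≤ 1) : ∃ u ∈ canon n, ∀ s ∈ SL L, u s = σ s := by
  classical
  obtain ⟨G, h1, h2, h3, h4⟩ := extension L σ hσ (fun _ => 0) (by simp)
  simp only [add_zero] at h4
  have hle : ∀ a, VN n G a ≤ n - 2 := by
    intro a
    have : VN n G a ≤ n - 1 := by
      rw [VN_eq, ← Finset.add_sum_erase _ _ (Finset.mem_univ a), h1, zero_mul, zero_add]
      calc _ ≤ ∑ j ∈ Finset.univ.erase a, 1 := by
            refine Finset.sum_le_sum fun j hj => ?_
            rw [if_neg (Finset.mem_erase.1 hj).1, mul_one]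
            exact h2 _
        _ = n - 1 := by simp
    have h5 := h4 a
    rw [Nat.even_iff] at h5 heven
    omega
  let g : Fin n → Fin n → ℕ := fun i j => if i = j then (n - 2 - VN n G i) / 2 else 0
  have hg : ∀ i j, g i j = g j i := by
    intro i j
    by_cases h : i = j
    · simp [h]
    · simp [g, h, Ne.symm h]
  let D : Sym2 (Fin n) →₀ ℕ := Finsupp.equivFunOnFinite.symm (Sym2.lift ⟨g, hg⟩)
  have hD : ∀ i j, D s(i, j) = g i j := fun i j => rfl
  refine ⟨G + D, mem_canon.2 ⟨?_, ?_⟩, ?_⟩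
  · intro a
    have : VN n D a = (n - 2 - VN n G a) / 2 * 2 := by
      rw [VN_eq, Finset.sum_eq_single a]
      · simp [hD, g]
      · intro j _ hj
        simp [hD, g, Ne.symm hj]
      · simp
    rw [VN_add, this]
    have h5 := h4 a
    have h6 := hle a
    rw [Nat.even_iff] at h5 heven
    omega
  · intro s hs
    have := h2 s
    induction s using Sym2.ind with
    | _ i j =>
      have hij : i ≠ j := by simpa using hs
      simpa [hD, g, hij] using this
  · intro s hs
    have h5 := h3 s hs
    induction s using Sym2.ind with
    | _ i j =>
      have hij : i ≠ j := (mk_mem_SL.1 hs).1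
      simpa [hD, g, hij] using h5

lemma canon_inj (L : Fin n) {u v : Sym2 (Fin n) →₀ ℕ} (hu : u ∈ canon n) (hv : v ∈ canon n)
    (h : ∀ s ∈ SL L, u s = v s) : u = v := by
  classical
  rw [mem_canon] at hu hv
  have hoff : ∀ i j, i ≠ j → u s(i, j) = v s(i, j) := by
    intro i j hij
    have h1 := star_even (L := L) (u := u + v)
      (fun s hs => by rw [Finsupp.add_apply, h s hs]; exact Even.add_self _)
      (fun a => by rw [VN_add, hu.1, hv.1]; exact Even.add_self _) i j hij
    have h2 := hu.2 s(i, j) (by simpa using hij)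
    have h3 := hv.2 s(i, j) (by simpa using hij)
    rw [Finsupp.add_apply, Nat.even_iff] at h1
    omega
  ext s
  induction s using Sym2.ind with
  | _ i j =>
    by_cases hij : i = j
    · subst hij
      have h1 := (hu.1 i).trans (hv.1 i).symm
      rw [VN_eq, VN_eq, ← Finset.add_sum_erase _ _ (Finset.mem_univ i),
        ← Finset.add_sum_erase _ _ (Finset.mem_univ i)] at h1
      have h2 : ∑ j ∈ Finset.univ.erase i, u s(i, j) * (if j = i then 2 else 1) =
          ∑ j ∈ Finset.univ.erase i, v s(i, j) * (if j = i then 2 else 1) := by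
        refine Finset.sum_congr rfl fun j hj => ?_
        rw [hoff i j (Ne.symm (Finset.mem_erase.1 hj).1)]
      rw [h2] at h1
      simpa using h1
    · exact hoff i j hij

lemma canon_sum (hn : 4 ≤ n) (heven : Even n) (L : Fin n) (τ : Sym2 (Fin n) → ℤˣ)
    (hτ : ∀ s, s ∉ SL L → τ s = 1) :
    ∑ u ∈ canon n, uc k (sgn n τ u) = ∏ s ∈ SL L, (1 + uc k (τ s)) := by
  classical
  rw [Finset.prod_one_add]
  apply Finset.sum_bij (fun u _ => (SL L).filter fun s => u s = 1)
  · intro u _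
    simp
  · intro u hu v hv h
    refine canon_inj L hu hv fun s hs => ?_
    have h1 := Finset.ext_iff.1 h s
    simp only [Finset.mem_filter, hs, true_and] at h1
    have h2 := (mem_canon.1 hu).2 s (mem_SL.1 hs).1
    have h3 := (mem_canon.1 hv).2 s (mem_SL.1 hs).1
    omega
  · intro A hA
    obtain ⟨u, hu, h⟩ := canon_surj hn heven L (fun s => if s ∈ A then 1 else 0)
      (fun s => by split_ifs <;> simp)
    refine ⟨u, hu, ?_⟩
    ext s
    simp only [Finset.mem_filter]
    constructor
    · rintro ⟨h1, h2⟩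
      rw [h s h1] at h2
      by_contra h3
      simp [h3] at h2
    · intro h1
      have h2 := Finset.mem_powerset.1 hA h1
      exact ⟨h2, by rw [h s h2]; simp [h1]⟩
  · intro u hu
    rw [← uc_prod, sgn]
    congr 1
    rw [Finset.prod_filter]
    rw [← Finset.prod_subset (Finset.subset_univ (SL L))]
    · refine Finset.prod_congr rfl fun s hs => ?_
      have h2 := (mem_canon.1 hu).2 s (mem_SL.1 hs).1
      interval_cases h : u s <;> simp
    · intro s _ hs
      simp [hτ s hs]

end Comb

section Tau

variable {n}

/-- vertex signs -/
def eta (L : Fin n) (ε : Sym2 (Fin n) → ℤˣ) (a : Fin n) : ℤˣ :=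
  if a = L then ε s(L, L) else ε s(a, L)

/-- coboundary of the vertex signs -/
def eta2 (L : Fin n) (ε : Sym2 (Fin n) → ℤˣ) : Sym2 (Fin n) → ℤˣ :=
  Sym2.lift ⟨fun a b => eta L ε a * eta L ε b, fun _ _ => mul_comm _ _⟩

/-- normalised signs -/
def tau (L : Fin n) (ε : Sym2 (Fin n) → ℤˣ) : Sym2 (Fin n) → ℤˣ :=
  (fun _ => ε s(L, L)) * eta2 L ε * ε

lemma tau_eq_one (L : Fin n) (ε : Sym2 (Fin n) → ℤˣ) (hd : ∀ a, ε s(a, a) = ε s(L, L))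
    (s : Sym2 (Fin n)) (hs : s ∉ SL L) : tau L ε s = 1 := by
  induction s using Sym2.ind with
  | _ a b =>
    simp only [tau, eta2, Pi.mul_apply, Sym2.lift_mk, eta]
    by_cases hab : a = b
    · subst hab
      rw [Int.units_mul_self, mul_one, hd a, Int.units_mul_self]
    · by_cases ha : a = L
      · subst ha
        rw [if_pos rfl, if_neg (Ne.symm hab), ← mul_assoc, Int.units_mul_self, one_mul,
          Sym2.eq_swap, Int.units_mul_self]
      · by_cases hb : b = L
        · subst hb
          rw [if_pos rfl, if_neg hab, mul_comm (ε s(a, b)), ← mul_assoc, Int.units_mul_self,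
            one_mul, Int.units_mul_self]
        · exact absurd (mk_mem_SL.2 ⟨hab, ha, hb⟩) hs

/-- the factor depending only on the degree -/
def chi (L : Fin n) (ε : Sym2 (Fin n) → ℤˣ) (b : Fin n → ℕ) : ℤˣ :=
  ε s(L, L) ^ ((∑ i, b i) / 2) * ∏ i, eta L ε i ^ b i

lemma sgn_const (δ : ℤˣ) (u : Sym2 (Fin n) →₀ ℕ) :
    sgn n (fun _ => δ) u = δ ^ ((∑ i, VN n u i) / 2) := by
  rw [VN_sum, sgn, Finset.prod_pow_eq_pow_sum]
  congr 1
  omega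

lemma sgn_eta2 (L : Fin n) (ε : Sym2 (Fin n) → ℤˣ) (u : Sym2 (Fin n) →₀ ℕ) :
    sgn n (eta2 L ε) u = ∏ i, eta L ε i ^ VN n u i := by
  classical
  have h : ∀ s, eta2 L ε s = ∏ i, eta L ε i ^ wtN n s i := by
    intro s
    induction s using Sym2.ind with
    | _ a b =>
      simp only [eta2, wtN_mk, pow_add, Finset.prod_mul_distrib, Sym2.lift_mk, pow_ite, pow_one,
        pow_zero, Finset.prod_ite_eq', Finset.mem_univ, if_true]
  simp only [sgn, h, VN]
  simp only [← Finset.prod_pow, ← Finset.prod_pow_eq_pow_sum]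
  rw [Finset.prod_comm]
  refine Finset.prod_congr rfl fun i _ => Finset.prod_congr rfl fun s _ => ?_
  rw [← pow_mul, mul_comm]

lemma sgn_tau (L : Fin n) (ε : Sym2 (Fin n) → ℤˣ) (u : Sym2 (Fin n) →₀ ℕ) :
    sgn n ε u = chi L ε (VN n u) * sgn n (tau L ε) u := by
  rw [tau, sgn_mul, sgn_mul, sgn_const, sgn_eta2, ← chi, ← mul_assoc, Int.units_mul_self, one_mul]

lemma coeff_Psi_tau (L : Fin n) (ε : Sym2 (Fin n) → ℤˣ) (f : R n k) (b : Fin n →₀ ℕ) :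
    coeff b (Psi n k ε f) = uc k (chi L ε b) * coeff b (Psi n k (tau L ε) f) := by
  rw [coeff_Psi, coeff_Psi, Finset.mul_sum]
  refine Finset.sum_congr rfl fun u _ => ?_
  split_ifs with h
  · subst h
    rw [sgn_tau L ε u, uc_mul, mul_assoc]
    rfl
  · simp

lemma Psi_tau_eq_zero (L : Fin n) (ε : Sym2 (Fin n) → ℤˣ) (f : R n k) :
    Psi n k ε f = 0 ↔ Psi n k (tau L ε) f = 0 := by
  simp only [MvPolynomial.ext_iff, coeff_Psi_tau k L ε f, coeff_zero, mul_eq_zero,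
    uc_ne_zero, false_or]

lemma uc_inj (hk : (2 : k) ≠ 0) {x : ℤˣ} (h : uc k x = 1) : x = 1 := by
  rcases Int.units_eq_one_or x with hx | hx
  · exact hx
  · exfalso
    rw [hx, uc_neg_one] at h
    apply hk
    linear_combination -h

lemma diag_of_J (hk : (2 : k) ≠ 0) (ε : Sym2 (Fin n) → ℤˣ)
    (h : ∀ f ∈ Jideal n k, Psi n k ε f = 0) (a b : Fin n) : ε s(a, a) = ε s(b, b) := by
  classical
  have key : ∀ a b : Fin n, a < b → ε s(a, a) = ε s(b, b) := by
    intro a b hab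
    have h1 := h _ (Ideal.subset_span ⟨a, b, hab, rfl⟩)
    have e1 : VF n (Finsupp.single s(a, a) 1) + VF n (Finsupp.single s(b, b) 1) =
        2 • VF n (Finsupp.single s(a, b) 1) := by
      apply Finsupp.ext
      intro i
      simp only [Finsupp.add_apply, Finsupp.smul_apply, VF_apply, VN_single, wtN_mk, smul_eq_mul]
      ring
    rw [map_sub, map_mul, map_pow, Psi, aeval_X, aeval_X, aeval_X, monomial_mul, monomial_pow,
      e1, ← uc_mul, ← uc_pow, sub_eq_zero] at h1
    have h2 := congrArg (coeff (2 • VF n (Finsupp.single s(a, b) 1))) h1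
    rw [coeff_monomial, coeff_monomial, if_pos rfl, if_pos rfl, Int.units_sq, uc_one] at h2
    have h3 := uc_inj k hk h2
    rw [← mul_one (ε s(a, a)), ← Int.units_mul_self (ε s(b, b)), ← mul_assoc, h3, one_mul]
  rcases lt_trichotomy a b with h1 | h1 | h1
  · exact key a b h1
  · rw [h1]
  · exact (key b a h1).symm

lemma fourier {N : ℕ} (L : Fin n) (τ : Fin N → Sym2 (Fin n) → ℤˣ)
    (hτ : ∀ i s, s ∉ SL L → τ i s = 1)
    (hbij : Function.Bijective fun (i : Fin N) (s : SL L) => τ i s)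
    (v : Sym2 (Fin n) →₀ ℕ) (s₀ : Sym2 (Fin n)) (hs₀ : s₀ ∈ SL L) (hv : ¬ Even (v s₀)) :
    ∑ i, uc k (sgn n (τ i) v) = 0 := by
  classical
  have h1 : ∀ i, uc k (sgn n (τ i) v) =
      (fun σ : SL L → ℤˣ => ∏ s : SL L, uc k (σ s ^ v s)) (fun s : SL L => τ i s) := by
    intro i
    rw [sgn, ← Finset.prod_subset (Finset.subset_univ (SL L)), uc_prod, ← Finset.prod_coe_sort]
    intro s _ hs
    simp [hτ i s hs]
  simp only [h1]
  rw [hbij.sum_comp (fun σ : SL L → ℤˣ => ∏ s : SL L, uc k (σ s ^ v s))]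
  have h2 := Finset.prod_univ_sum (fun _ : SL L => (Finset.univ : Finset ℤˣ))
    (fun s x => uc k (x ^ v s))
  rw [Fintype.piFinset_univ] at h2
  rw [← h2]
  apply Finset.prod_eq_zero (Finset.mem_univ ⟨s₀, hs₀⟩)
  rw [Nat.not_even_iff_odd] at hv
  rw [UnitsInt.univ, Finset.sum_pair (by decide)]
  simp [uc, hv.neg_one_pow]

lemma pplus_eq : pplusEven n k = ∑ u ∈ canon n, monomial u (1 : k) := rfl

lemma Psi_pplus (ε : Sym2 (Fin n) → ℤˣ) : Psi n k ε (pplusEven n k) =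
    monomial (Finsupp.equivFunOnFinite.symm fun _ => n - 2)
      (∑ u ∈ canon n, uc k (sgn n ε u)) := by
  rw [pplus_eq, map_sum, map_sum]
  refine Finset.sum_congr rfl fun u hu => ?_
  rw [Psi_monomial, mul_one]
  congr 2
  apply Finsupp.ext
  intro i
  exact (mem_canon.1 hu).1 i

/-- vanishing of coefficients at small degrees -/
lemma coeff_small {N : ℕ} (hn : 4 ≤ n) (L : Fin n) (τ : Fin N → Sym2 (Fin n) → ℤˣ)
    (hτ : ∀ i s, s ∉ SL L → τ i s = 1)
    (hbij : Function.Bijective fun (i : Fin N) (s : SL L) => τ i s)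
    (l : Fin N) (f : R n k) (hf : ∀ i, i ≠ l → Psi n k (τ i) f = 0)
    (b : Fin n →₀ ℕ) (hb : Even (∑ i, b i)) (i₀ : Fin n) (hi₀ : b i₀ < n - 2) :
    coeff b (Psi n k (τ l) f) = 0 := by
  classical
  obtain ⟨G, hG0, hG1, hGb, hGi⟩ := bigG hn b hb i₀
  have h1 : ∑ i, uc k (sgn n (τ i) G) * coeff b (Psi n k (τ i) f) = 0 := by
    simp only [coeff_Psi, Finset.mul_sum]
    rw [Finset.sum_comm]
    refine Finset.sum_eq_zero fun u _ => ?_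
    by_cases hu : VF n u = b
    · simp only [if_pos hu, ← mul_assoc]
      rw [← Finset.sum_mul]
      simp only [← uc_mul, ← sgn_add]
      by_cases h : ∀ s ∈ SL L, Even ((G + u) s)
      · exfalso
        have h2 := star_even h (fun a => by
          rw [VN_add, ← VF_apply n u, hu]; exact hGb a)
        have h3 : ∀ s, G s ≤ u s := by
          intro s
          have h4 := hG1 s
          induction s using Sym2.ind with
          | _ i j =>
            by_cases hij : i = j
            · subst hij
              rw [hG0]; exact Nat.zero_le _
            · have h5 := h2 i j hij
              rw [Finsupp.add_apply, Nat.even_iff] at h5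
              omega
        have h4 := VN_mono_offdiag h3 i₀
        rw [← VF_apply n u, hu] at h4
        omega
      · push Not at h
        obtain ⟨s₀, hs₀, h⟩ := h
        rw [fourier k L τ hτ hbij _ s₀ hs₀ (by simpa using h), zero_mul]
    · simp [hu]
  rw [Finset.sum_eq_single l] at h1
  · exact (mul_eq_zero.1 h1).resolve_left (uc_ne_zero k _)
  · intro i _ hi
    rw [hf i hi]; simp
  · simp

end Tau

set_option maxHeartbeats 1000000 in
/-- For even `n ≥ 4` and `char k ≠ 2`: omitting one component of the
prime decomposition of `J_n` yields `J_n + ⟨φ_l(p⁺_n)⟩` with a single additional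
generator; `p⁺_n` is `V_n`-homogeneous of `V_n`-degree `(n-2,…,n-2)` and total degree
`n(n-2)/2`. -/
theorem subintersection_even (n : ℕ) (hn : 4 ≤ n) (heven : Even n)
    (k : Type*) [Field k] (hk : (2 : k) ≠ 0)
    (φ : Fin (2 ^ c (n - 1)) → (R n k ≃ₐ[k] R n k))
    (htw : ∀ i, IsTwisting n k (φ i))
    (hdist : Function.Injective fun i => Ideal.map (φ i).toAlgHom (Iideal n k))
    (hdec : Jideal n k = ⨅ i, Ideal.map (φ i).toAlgHom (Iideal n k)) :
    (∀ l, (⨅ (i) (_ : i ≠ l), Ideal.map (φ i).toAlgHom (Iideal n k)) =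
        Jideal n k + Ideal.span {(φ l) (pplusEven n k)}) ∧
    VHomog n k (pplusEven n k) (fun _ => n - 2) ∧
    (pplusEven n k).totalDegree = n * (n - 2) / 2 := by
  classical
  let L : Fin n := ⟨0, by omega⟩
  choose ε hε using fun i => exists_sign (htw i)
  have hJ : ∀ f, f ∈ Jideal n k ↔ ∀ i, Psi n k (ε i) f = 0 := by
    intro f
    rw [hdec, Ideal.mem_iInf]
    exact forall_congr' fun i => mem_map_iff (hε i) f
  have hdiag : ∀ i a, ε i s(a, a) = ε i s(L, L) := fun i a =>
    diag_of_J k hk (ε i) (fun f hf => (hJ f).1 hf i) a L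
  have hτ : ∀ i s, s ∉ SL L → tau L (ε i) s = 1 := fun i s hs =>
    tau_eq_one L (ε i) (hdiag i) s hs
  have hinj : Function.Injective fun (i : Fin (2 ^ c (n - 1))) (s : SL L) => tau L (ε i) s := by
    intro i j hij
    have h1 : tau L (ε i) = tau L (ε j) := by
      funext s
      by_cases hs : s ∈ SL L
      · exact congrFun hij ⟨s, hs⟩
      · rw [hτ i s hs, hτ j s hs]
    apply hdist
    apply Ideal.ext
    intro f
    rw [mem_map_iff (hε i), mem_map_iff (hε j), Psi_tau_eq_zero k L, h1, ← Psi_tau_eq_zero k L]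
  have hbij : Function.Bijective
      fun (i : Fin (2 ^ c (n - 1))) (s : SL L) => tau L (ε i) s := by
    rw [Fintype.bijective_iff_injective_and_card]
    refine ⟨hinj, ?_⟩
    rw [Fintype.card_fin]
    simp [card_SL, c]
  -- the value of the twisted Veronese maps on the extra generator
  have hval : ∀ i l, i ≠ l → Psi n k (ε i) (φ l (pplusEven n k)) = 0 := by
    intro i l hil
    rw [Psi_comp (hε l), Psi_pplus]
    have h1 : ∑ u ∈ canon n, uc k (sgn n (ε i * ε l) u) =
        uc k (chi L (ε i) (fun _ => n - 2) * chi L (ε l) (fun _ => n - 2)) *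
          ∑ u ∈ canon n, uc k (sgn n (tau L (ε i) * tau L (ε l)) u) := by
      rw [Finset.mul_sum]
      refine Finset.sum_congr rfl fun u hu => ?_
      have hV : VN n u = fun _ => n - 2 := funext (mem_canon.1 hu).1
      rw [← uc_mul, sgn_mul, sgn_mul, sgn_tau L (ε i), sgn_tau L (ε l), hV, mul_mul_mul_comm]
    have h2 : ∃ s ∈ SL L, tau L (ε i) s ≠ tau L (ε l) s := by
      by_contra! h
      exact hil (hinj (funext fun s => h s s.2))
    obtain ⟨s, hs, hne⟩ := h2
    rw [h1, canon_sum k hn heven L _ (fun s hs => by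
      rw [Pi.mul_apply, hτ i s hs, hτ l s hs, one_mul])]
    rw [Finset.prod_eq_zero hs]
    · simp
    · have : tau L (ε i) s * tau L (ε l) s = -1 := by
        rcases Int.units_eq_one_or (tau L (ε i) s) with h | h <;>
        rcases Int.units_eq_one_or (tau L (ε l) s) with h' | h' <;> simp_all
      rw [Pi.mul_apply, this, uc_neg_one]
      ring
  have hval' : ∀ l, Psi n k (ε l) (φ l (pplusEven n k)) =
      monomial (Finsupp.equivFunOnFinite.symm fun _ => n - 2) ((2 : k) ^ (SL L).card) := by
    intro l
    have h0 : ε l * ε l = 1 := funext fun s => Int.units_mul_self _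
    rw [Psi_comp (hε l), Psi_pplus, h0, canon_sum k hn heven L 1 (fun s hs => rfl)]
    simp only [Pi.one_apply, uc_one, Finset.prod_const]
    norm_num
  have hsupp : ∀ u, coeff u (pplusEven n k) = if u ∈ canon n then 1 else 0 := by
    intro u
    rw [pplus_eq, coeff_sum]
    simp [coeff_monomial]
  have hhom : VHomog n k (pplusEven n k) (fun _ => n - 2) := by
    intro u hu
    rw [mem_support_iff, hsupp] at hu
    exact funext (mem_canon.1 (by by_contra h; simp [h] at hu)).1
  refine ⟨fun l => ?_, hhom, ?_⟩
  · apply le_antisymm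
    · intro f hf
      have hf' : ∀ i, i ≠ l → Psi n k (ε i) f = 0 := by
        intro i hi
        rw [← mem_map_iff (hε i)]
        rw [Ideal.mem_iInf] at hf
        have := hf i
        rw [Ideal.mem_iInf] at this
        exact this hi
      -- find `h`
      have hh : ∃ h, Psi n k (ε l) (h * φ l (pplusEven n k)) = Psi n k (ε l) f := by
        obtain ⟨T, hT⟩ : ∃ T : R n k →ₗ[k] MvPolynomial (Fin n) k,
            ∀ h, T h = Psi n k (ε l) (h * φ l (pplusEven n k)) :=
          ⟨(Psi n k (ε l)).toLinearMap ∘ₗ LinearMap.mulRight k (φ l (pplusEven n k)),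
            fun h => rfl⟩
        have : Psi n k (ε l) f ∈ LinearMap.range T := by
          rw [(Psi n k (ε l) f).as_sum]
          refine Submodule.sum_mem _ fun b hb => ?_
          rw [mem_support_iff] at hb
          have heb : Even (∑ i, b i) := by
            have h1 := hb
            rw [coeff_Psi] at h1
            obtain ⟨u, -, hu⟩ := Finset.exists_ne_zero_of_sum_ne_zero h1
            have h2 : VF n u = b := by
              by_contra h
              simp [h] at hu
            rw [← h2]
            simp only [VF_apply, VN_sum]
            exact even_two_mul _
          have hge : ∀ i, n - 2 ≤ b i := by
            intro i
            by_contra! hlt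
            apply hb
            rw [coeff_Psi_tau k L, coeff_small k hn L (fun i => tau L (ε i)) hτ hbij l f
              (fun i hi => (Psi_tau_eq_zero k L _ f).1 (hf' i hi)) b heb i hlt, mul_zero]
          obtain ⟨m, hm⟩ : Even (∑ i, (b i - (n - 2))) := by
            have h3 : ∑ i, b i = ∑ i, (b i - (n - 2)) + n * (n - 2) := by
              have h4 : ∑ i : Fin n, (n - 2) = n * (n - 2) := by simp
              rw [← h4, ← Finset.sum_add_distrib]
              exact Finset.sum_congr rfl fun i _ => (Nat.sub_add_cancel (hge i)).symm
            rw [h3] at heb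
            exact (Nat.even_add.1 heb).2 (heven.mul_right _)
          obtain ⟨w, hw⟩ := exists_VN m (fun i => b i - (n - 2)) (by rw [hm]; ring)
          refine ⟨monomial w (uc k (sgn n (ε l) w) * ((2 : k) ^ (SL L).card)⁻¹ *
            coeff b (Psi n k (ε l) f)), ?_⟩
          rw [hT, map_mul, hval', Psi_monomial, monomial_mul]
          have e1 : VF n w + Finsupp.equivFunOnFinite.symm (fun _ => n - 2) = b := by
            apply Finsupp.ext
            intro i
            rw [Finsupp.add_apply, VF_apply, hw]
            exact Nat.sub_add_cancel (hge i)
          have e2 : uc k (sgn n (ε l) w) * uc k (sgn n (ε l) w) = 1 := by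
            rw [← uc_mul, Int.units_mul_self, uc_one]
          have e3 : ((2 : k) ^ (SL L).card)⁻¹ * (2 : k) ^ (SL L).card = 1 :=
            inv_mul_cancel₀ (pow_ne_zero _ hk)
          rw [e1]
          refine congrArg (monomial b) ?_
          generalize coeff b (Psi n k (ε l) f) = z
          generalize ((2 : k) ^ (SL L).card)⁻¹ = q' at e3 ⊢
          generalize (2 : k) ^ (SL L).card = q at e3 ⊢
          generalize uc k (sgn n (ε l) w) = y at e2 ⊢
          linear_combination z * q' * q * e2 + z * e3
        obtain ⟨h, hh⟩ := this
        exact ⟨h, (hT h).symm.trans hh⟩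
      obtain ⟨h, hh⟩ := hh
      have h1 : f - h * φ l (pplusEven n k) ∈ Jideal n k := by
        rw [hJ]
        intro i
        by_cases hi : i = l
        · subst hi
          rw [map_sub, hh, sub_self]
        · rw [map_sub, map_mul, hf' i hi, hval i l hi, mul_zero, sub_zero]
      rw [← sub_add_cancel f (h * φ l (pplusEven n k))]
      exact Submodule.add_mem_sup h1
        (Ideal.mul_mem_left _ _ (Ideal.subset_span (Set.mem_singleton _)))
    · refine sup_le ?_ ?_
      · rw [hdec]
        exact le_iInf fun i => le_iInf fun _ => iInf_le _ i
      · rw [Ideal.span_le, Set.singleton_subset_iff]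
        rw [SetLike.mem_coe, Ideal.mem_iInf]
        intro i
        rw [Ideal.mem_iInf]
        intro hi
        rw [mem_map_iff (hε i)]
        exact hval i l hi
  · apply IsHomogeneous.totalDegree
    · intro u hu
      have h1 := hhom u (mem_support_iff.2 hu)
      have h2 := VN_sum n u
      rw [h1] at h2
      have h3 : ∑ i : Fin n, (n - 2) = n * (n - 2) := by simp
      rw [h3] at h2
      have h4 : Finsupp.weight 1 u = ∑ s, u s := by
        rw [Finsupp.weight_apply, Finsupp.sum_fintype _ _ (by simp)]
        simp
      rw [h4]
      omega
    · obtain ⟨u, hu, -⟩ := canon_surj hn heven L (fun _ => 0) (fun _ => Nat.zero_le _)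
      intro h
      have := hsupp u
      rw [h] at this
      simp [hu] at this

end Veronese
end

section
/- Let n ≥ 4 be even and set σ = (n−2)²/2 (this is c_{n−1} − (n−2)/2). Then, as elements of k[x]/J_n, x_{nn}^σ · p^+_n = p_n; that is, x_{nn}^σ · p^+_n − p_n ∈ J_n. -/
open scoped BigOperators

namespace Veronese

open MvPolynomial

variable (n : ℕ)

variable (k : Type*) [Field k]

section Aux

variable {m : ℕ}

/-- the strictly increasing pairs. -/
def A (m : ℕ) : Finset (Fin m × Fin m) :=
  Finset.univ.filter (fun p : Fin m × Fin m => p.1 < p.2)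

lemma prod_le_sym2 {M : Type*} [CommMonoid M] (f : Sym2 (Fin m) → M) :
    ∏ s, f s = ∏ p ∈ Finset.univ.filter (fun p : Fin m × Fin m => p.1 ≤ p.2), f s(p.1, p.2) := by
  symm
  refine Finset.prod_bij' (fun p _ => s(p.1, p.2)) (fun s _ => (s.inf, s.sup)) ?_ ?_ ?_ ?_ ?_
  · simp
  · intro s _
    simp [Sym2.inf_le_sup]
  · rintro ⟨a, b⟩ h
    simp at h
    simp [h]
  · intro s _
    induction s using Sym2.ind with
    | _ a b =>
      rcases le_total a b with h | h <;> simp [h]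
  · simp

lemma prod_le_split {M : Type*} [CommMonoid M] (f : Sym2 (Fin m) → M) :
    ∏ s, f s = (∏ i, f s(i, i)) * ∏ p ∈ A m, f s(p.1, p.2) := by
  rw [prod_le_sym2, A, ← Finset.prod_filter_mul_prod_filter_not _ (fun p => p.1 = p.2)]
  congr 1
  · symm
    refine Finset.prod_bij' (fun i _ => (i, i)) (fun p _ => p.1) ?_ ?_ ?_ ?_ ?_ <;> simp
  · apply Finset.prod_congr _ (fun _ _ => rfl)
    ext p
    simp [lt_iff_le_and_ne]

lemma prod_A_succ {M : Type*} [CommMonoid M] (g : Fin (m + 1) × Fin (m + 1) → M) :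
    ∏ p ∈ A (m + 1), g p = (∏ i : Fin m, g (i.castSucc, Fin.last m)) *
      ∏ p ∈ A m, g (p.1.castSucc, p.2.castSucc) := by
  simp only [A, Finset.prod_filter, Fintype.prod_prod_type, Fin.prod_univ_castSucc]
  have h : ∀ i : Fin m, ¬ Fin.last m < i.castSucc := fun i => (Fin.castSucc_lt_last i).asymm
  simp [h, Fin.castSucc_lt_last, Finset.prod_mul_distrib, mul_comm]

lemma prod_split {M : Type*} [CommMonoid M] (f : Sym2 (Fin (m + 1)) → M) :
    ∏ s, f s = (∏ i : Fin m, f s(i.castSucc, i.castSucc)) * f s(Fin.last m, Fin.last m) *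
      ((∏ i : Fin m, f s(i.castSucc, Fin.last m)) *
      ∏ p ∈ A m, f s(p.1.castSucc, p.2.castSucc)) := by
  rw [prod_le_split, prod_A_succ, Fin.prod_univ_castSucc]

lemma sum_split {M : Type*} [AddCommMonoid M] (f : Sym2 (Fin (m + 1)) → M) :
    ∑ s, f s = (∑ i : Fin m, f s(i.castSucc, i.castSucc)) + f s(Fin.last m, Fin.last m) +
      ((∑ i : Fin m, f s(i.castSucc, Fin.last m)) +
      ∑ p ∈ A m, f s(p.1.castSucc, p.2.castSucc)) :=
  prod_split (M := Multiplicative M) f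

/-- incidence -/
def inc (a : Fin m) (p : Fin m × Fin m) : ℕ := (if a = p.1 then 1 else 0) + (if a = p.2 then 1 else 0)

/-- degree of a vertex in an edge set -/
def dg (T : Finset (Fin m × Fin m)) (a : Fin m) : ℕ := ∑ p ∈ T, inc a p

lemma sum_dg (T : Finset (Fin m × Fin m)) : ∑ a, dg T a = 2 * T.card := by
  unfold dg
  rw [Finset.sum_comm]
  simp [inc, Finset.sum_add_distrib, mul_comm, mul_two]

lemma dg_A (a : Fin m) : dg (A m) a = m - 1 := by
  unfold dg inc
  rw [Finset.sum_add_distrib]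
  simp only [A, Finset.sum_filter, Fintype.sum_prod_type]
  have h1 : ∑ x : Fin m, ∑ y : Fin m, (if x < y then if a = x then 1 else 0 else 0)
      = (Finset.univ.filter (fun y => a < y)).card := by
    rw [Finset.sum_comm]
    rw [Finset.card_filter]
    refine Finset.sum_congr rfl fun y _ => ?_
    rw [Finset.sum_eq_single a] <;> simp +contextual [eq_comm]
  have h2 : ∑ x : Fin m, ∑ y : Fin m, (if x < y then if a = y then 1 else 0 else 0)
      = (Finset.univ.filter (fun y => y < a)).card := by
    rw [Finset.card_filter]
    refine Finset.sum_congr rfl fun y _ => ?_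
    rw [Finset.sum_eq_single a] <;> simp +contextual [eq_comm]
  rw [h1, h2]
  have e1 : Finset.univ.filter (fun y => a < y) = Finset.Ioi a := by ext; simp
  have e2 : Finset.univ.filter (fun y => y < a) = Finset.Iio a := by ext; simp
  rw [e1, e2, Fin.card_Ioi, Fin.card_Iio]
  omega

lemma dg_add {T : Finset (Fin m × Fin m)} (hT : T ⊆ A m) (a : Fin m) :
    dg (A m \ T) a + dg T a = m - 1 := by
  rw [← dg_A a]
  exact Finset.sum_sdiff hT

/-- degree of an exponent vector in the first `m` indices -/
lemma VN_castSucc (u : Sym2 (Fin (m + 1)) →₀ ℕ) (a : Fin m) :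
    VN (m + 1) u a.castSucc = 2 * u s(a.castSucc, a.castSucc) + u s(a.castSucc, Fin.last m) +
      ∑ p ∈ A m, u s(p.1.castSucc, p.2.castSucc) * inc a p := by
  unfold VN
  rw [sum_split]
  simp [wtN, inc, mul_add, Finset.sum_add_distrib, Fin.castSucc_ne_last]
  ring

lemma VN_last (u : Sym2 (Fin (m + 1)) →₀ ℕ) :
    VN (m + 1) u (Fin.last m) = 2 * u s(Fin.last m, Fin.last m) +
      ∑ i : Fin m, u s(i.castSucc, Fin.last m) := by
  unfold VN
  rw [sum_split]
  have h : ∀ i : Fin m, ¬ Fin.last m = i.castSucc := fun i => (Fin.castSucc_lt_last i).ne'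
  simp [wtN, h]
  ring

/-- the exponent on `i ≤ j`. -/
def hh (T : Finset (Fin m × Fin m)) (a b : Fin (m + 1)) : ℕ :=
  Fin.lastCases (motive := fun _ => ℕ)
    (Fin.lastCases (motive := fun _ => ℕ) ((m - 1 - ∑ i, dg (A m \ T) i % 2) / 2)
      (fun i => dg (A m \ T) i % 2) a)
    (fun j => Fin.lastCases (motive := fun _ => ℕ) 0
      (fun i => if i = j then dg (A m \ T) i / 2 else if (i, j) ∈ T then 1 else 0) a) b

/-- the exponent vector attached to an edge set. -/
noncomputable def uT (T : Finset (Fin m × Fin m)) : Sym2 (Fin (m + 1)) →₀ ℕ :=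
  Finsupp.equivFunOnFinite.symm fun s => hh T s.inf s.sup

lemma uT_ll (T : Finset (Fin m × Fin m)) : uT T s(Fin.last m, Fin.last m) =
    (m - 1 - ∑ i, dg (A m \ T) i % 2) / 2 := by
  simp [uT, hh]

lemma uT_il (T : Finset (Fin m × Fin m)) (i : Fin m) : uT T s(i.castSucc, Fin.last m) =
    dg (A m \ T) i % 2 := by
  simp [uT, hh, Fin.le_last]

lemma uT_ii (T : Finset (Fin m × Fin m)) (i : Fin m) : uT T s(i.castSucc, i.castSucc) =
    dg (A m \ T) i / 2 := by
  simp [uT, hh]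

lemma uT_ij (T : Finset (Fin m × Fin m)) (p : Fin m × Fin m) (hp : p ∈ A m) :
    uT T s(p.1.castSucc, p.2.castSucc) = if p ∈ T then 1 else 0 := by
  have hp' : p.1 < p.2 := by simpa [A] using hp
  have h : p.1.castSucc ≤ p.2.castSucc := by simpa using hp'.le
  simp [uT, hh, h, hp'.ne, -Fin.castSucc_le_castSucc_iff]

lemma parity {T : Finset (Fin m × Fin m)} (hT : T ⊆ A m) (hm : Odd m) :
    2 * ((m - 1 - ∑ i, dg (A m \ T) i % 2) / 2) + ∑ i, dg (A m \ T) i % 2 = m - 1 := by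
  have h1 : ∑ i, dg (A m \ T) i % 2 + 2 * ∑ i, dg (A m \ T) i / 2 = 2 * (A m \ T).card := by
    rw [← sum_dg, Finset.mul_sum, ← Finset.sum_add_distrib]
    exact Finset.sum_congr rfl fun i _ => Nat.mod_add_div _ _
  have h2 : ∑ i, dg (A m \ T) i % 2 ≤ ∑ i : Fin m, 1 :=
    Finset.sum_le_sum fun i _ => by omega
  simp at h2
  obtain ⟨r, hr⟩ := hm
  omega

lemma expo {T : Finset (Fin m × Fin m)} (hT : T ⊆ A m) (hm : Odd m) :
    (m - 1) ^ 2 / 2 + (m - 1 - ∑ i, dg (A m \ T) i % 2) / 2 =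
      T.card + ∑ i, dg (A m \ T) i / 2 := by
  have h1 : ∑ i, dg (A m \ T) i % 2 + 2 * ∑ i, dg (A m \ T) i / 2 = ∑ i, dg (A m \ T) i := by
    rw [Finset.mul_sum, ← Finset.sum_add_distrib]
    exact Finset.sum_congr rfl fun i _ => Nat.mod_add_div _ _
  have h2 : ∑ i, dg (A m \ T) i + 2 * T.card = m * (m - 1) := by
    rw [← sum_dg, ← Finset.sum_add_distrib]
    simp [dg_add hT]
  have h3 := parity hT hm
  obtain ⟨r, rfl⟩ := hm
  have h4 : (2 * r + 1 - 1) ^ 2 / 2 = 2 * r ^ 2 := by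
    have : (2 * r + 1 - 1) ^ 2 = 2 * (2 * r ^ 2) := by simp; ring
    omega
  have h5 : (2 * r + 1) * (2 * r + 1 - 1) = 4 * r ^ 2 + 2 * r := by simp; ring
  omega

lemma uT_fiber {T : Finset (Fin m × Fin m)} (hT : T ⊆ A m) (hm : Odd m) :
    VN (m + 1) (uT T) = fun _ => m - 1 := by
  funext i
  induction i using Fin.lastCases with
  | last => simp only [VN_last, uT_ll, uT_il]; exact parity hT hm
  | cast a =>
    rw [VN_castSucc, uT_ii, uT_il]
    have : ∑ p ∈ A m, uT T s(p.1.castSucc, p.2.castSucc) * inc a p = dg T a := by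
      rw [dg, ← Finset.inter_eq_right.mpr hT, ← Finset.filter_mem_eq_inter, Finset.sum_filter]
      refine Finset.sum_congr rfl fun p hp => ?_
      rw [uT_ij _ _ hp]
      simp [hp]
    rw [this, ← dg_add hT a]
    omega

lemma sym2_cases {P : Sym2 (Fin (m + 1)) → Prop} (h1 : P s(Fin.last m, Fin.last m))
    (h2 : ∀ i : Fin m, P s(i.castSucc, i.castSucc)) (h3 : ∀ i : Fin m, P s(i.castSucc, Fin.last m))
    (h4 : ∀ p ∈ A m, P s(p.1.castSucc, p.2.castSucc)) (s) : P s := by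
  induction s using Sym2.ind with
  | _ a b =>
    induction a using Fin.lastCases with
    | last =>
      induction b using Fin.lastCases with
      | last => exact h1
      | cast b => rw [Sym2.eq_swap]; exact h3 b
    | cast a =>
      induction b using Fin.lastCases with
      | last => exact h3 a
      | cast b =>
        rcases lt_trichotomy a b with h | h | h
        · exact h4 (a, b) (by simpa [A] using h)
        · subst h; exact h2 a
        · rw [Sym2.eq_swap]; exact h4 (b, a) (by simpa [A] using h)

lemma term_eq {S : Type*} [CommRing S] (x : Sym2 (Fin (m + 1)) → S)
    (hx : ∀ i : Fin m, x s(i.castSucc, Fin.last m) ^ 2 =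
      x s(i.castSucc, i.castSucc) * x s(Fin.last m, Fin.last m))
    {T : Finset (Fin m × Fin m)} (hT : T ⊆ A m) (hm : Odd m) :
    x s(Fin.last m, Fin.last m) ^ ((m - 1) ^ 2 / 2) * ∏ s, x s ^ uT T s =
      (∏ p ∈ T, x s(p.1.castSucc, p.2.castSucc) * x s(Fin.last m, Fin.last m)) *
      ∏ p ∈ A m \ T, x s(p.1.castSucc, Fin.last m) * x s(p.2.castSucc, Fin.last m) := by
  have h1 : ∏ p ∈ A m \ T, x s(p.1.castSucc, Fin.last m) * x s(p.2.castSucc, Fin.last m) =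
      ∏ a : Fin m, x s(a.castSucc, Fin.last m) ^ dg (A m \ T) a := by
    simp only [dg, ← Finset.prod_pow_eq_pow_sum]
    rw [Finset.prod_comm]
    refine Finset.prod_congr rfl fun p _ => ?_
    simp only [inc, pow_add, Finset.prod_mul_distrib]
    simp [pow_ite]
  have h2 : ∀ a : Fin m, x s(a.castSucc, Fin.last m) ^ dg (A m \ T) a =
      x s(a.castSucc, Fin.last m) ^ (dg (A m \ T) a % 2) *
      (x s(a.castSucc, a.castSucc) ^ (dg (A m \ T) a / 2) *
        x s(Fin.last m, Fin.last m) ^ (dg (A m \ T) a / 2)) := by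
    intro a
    rw [← mul_pow, ← hx, ← pow_mul, ← pow_add, Nat.mod_add_div]
  have h3 : ∏ p ∈ A m, x s(p.1.castSucc, p.2.castSucc) ^ uT T s(p.1.castSucc, p.2.castSucc) =
      ∏ p ∈ T, x s(p.1.castSucc, p.2.castSucc) := by
    conv_rhs => rw [← Finset.inter_eq_right.mpr hT, ← Finset.filter_mem_eq_inter,
      Finset.prod_filter]
    refine Finset.prod_congr rfl fun p hp => ?_
    rw [uT_ij _ _ hp]
    split_ifs <;> simp
  rw [h1, prod_split, h3, Finset.prod_congr rfl fun a _ => h2 a]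
  simp only [uT_ll, uT_ii, uT_il, Finset.prod_mul_distrib, Finset.prod_const,
    Finset.prod_pow_eq_pow_sum]
  have h4 := congrArg (fun e => x s(Fin.last m, Fin.last m) ^ e) (expo hT hm)
  simp only [pow_add] at h4
  linear_combination (∏ i : Fin m, x s(i.castSucc, i.castSucc) ^ (dg (A m \ T) i / 2)) *
    (∏ i : Fin m, x s(i.castSucc, Fin.last m) ^ (dg (A m \ T) i % 2)) *
    (∏ p ∈ T, x s(p.1.castSucc, p.2.castSucc)) * h4

lemma uT_inv (u : Sym2 (Fin (m + 1)) →₀ ℕ) (hu : VN (m + 1) u = fun _ => m - 1)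
    (h1 : ∀ s : Sym2 (Fin (m + 1)), ¬s.IsDiag → u s ≤ 1) :
    uT ((A m).filter fun p => u s(p.1.castSucc, p.2.castSucc) = 1) = u := by
  set T := (A m).filter fun p => u s(p.1.castSucc, p.2.castSucc) = 1 with hTdef
  have hT : T ⊆ A m := Finset.filter_subset _ _
  have hij : ∀ p ∈ A m, u s(p.1.castSucc, p.2.castSucc) = if p ∈ T then 1 else 0 := by
    intro p hp
    have hp' : p.1 < p.2 := by simpa [A] using hp
    have := h1 s(p.1.castSucc, p.2.castSucc) (by simpa using hp'.ne)
    simp only [hTdef, Finset.mem_filter, hp, true_and]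
    split_ifs <;> omega
  have key : ∀ a : Fin m, 2 * u s(a.castSucc, a.castSucc) + u s(a.castSucc, Fin.last m) =
      dg (A m \ T) a := by
    intro a
    have h := congrFun hu a.castSucc
    rw [VN_castSucc] at h
    have : ∑ p ∈ A m, u s(p.1.castSucc, p.2.castSucc) * inc a p = dg T a := by
      rw [dg, ← Finset.inter_eq_right.mpr hT, ← Finset.filter_mem_eq_inter, Finset.sum_filter]
      refine Finset.sum_congr rfl fun p hp => ?_
      rw [hij _ hp]
      simp [hp]
    have h' := dg_add hT a
    omega
  have hl : ∀ a : Fin m, u s(a.castSucc, Fin.last m) ≤ 1 := fun a =>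
    h1 _ (by simp [Fin.castSucc_ne_last])
  have hil : ∀ a : Fin m, u s(a.castSucc, Fin.last m) = dg (A m \ T) a % 2 := fun a => by
    have := key a
    have := hl a
    omega
  ext s
  induction s using sym2_cases with
  | h1 =>
    rw [uT_ll]
    have h := congrFun hu (Fin.last m)
    rw [VN_last] at h
    simp only [hil] at h
    omega
  | h2 i => rw [uT_ii, ← key i]; have := hl i; omega
  | h3 i => rw [uT_il, hil]
  | h4 p hp => rw [uT_ij _ _ hp, hij _ hp]

lemma uT_le (T : Finset (Fin m × Fin m)) (s : Sym2 (Fin (m + 1))) : ¬s.IsDiag → uT T s ≤ 1 := by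
  induction s using sym2_cases with
  | h1 => simp
  | h2 i => simp
  | h3 i => intro _; rw [uT_il]; omega
  | h4 p hp => intro _; rw [uT_ij _ _ hp]; split_ifs <;> simp

lemma main_aux (hm : Odd m) (k : Type*) [Field k] :
    X s(Fin.last m, Fin.last m) ^ ((m - 1) ^ 2 / 2) * pplusAt (m + 1) k (fun _ => m - 1) -
      ∏ p ∈ A m, (X s(p.1.castSucc, p.2.castSucc) * X s(Fin.last m, Fin.last m)
      + X s(p.1.castSucc, Fin.last m) * X s(p.2.castSucc, Fin.last m)) ∈ Jideal (m + 1) k := by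
  classical
  rw [← Ideal.Quotient.eq]
  have hx : ∀ i : Fin m, Ideal.Quotient.mk (Jideal (m + 1) k) (X s(i.castSucc, Fin.last m)) ^ 2 =
      Ideal.Quotient.mk (Jideal (m + 1) k) (X s(i.castSucc, i.castSucc)) *
      Ideal.Quotient.mk (Jideal (m + 1) k) (X s(Fin.last m, Fin.last m)) := by
    intro i
    rw [← map_pow, ← map_mul, eq_comm, Ideal.Quotient.eq]
    exact Ideal.subset_span ⟨i.castSucc, Fin.last m, Fin.castSucc_lt_last i, rfl⟩
  rw [Finset.prod_add, pplusAt, Finset.mul_sum, map_sum, map_sum]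
  symm
  refine Finset.sum_bij' (fun T _ => uT T)
    (fun u _ => (A m).filter fun p => u s(p.1.castSucc, p.2.castSucc) = 1) ?_ ?_ ?_ ?_ ?_
  · intro T hT
    rw [Finset.mem_powerset] at hT
    simp only [Finset.mem_filter, fiberFinset, Set.Finite.mem_toFinset]
    exact ⟨uT_fiber hT hm, uT_le T⟩
  · intro u _
    simp
  · intro T hT
    rw [Finset.mem_powerset] at hT
    ext p
    simp only [Finset.mem_filter]
    constructor
    · rintro ⟨hp, h⟩
      rw [uT_ij _ _ hp] at h
      by_contra hc
      simp [hc] at h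
    · intro hp
      rw [uT_ij _ _ (hT hp)]
      simp [hp, hT hp]
  · intro u hu
    simp only [Finset.mem_filter, fiberFinset, Set.Finite.mem_toFinset] at hu
    exact uT_inv u hu.1 hu.2
  · intro T hT
    rw [Finset.mem_powerset] at hT
    have := term_eq (fun s => Ideal.Quotient.mk (Jideal (m + 1) k) (X s)) hx hT hm
    have hmon : monomial (uT T) (1 : k) = ∏ s, X s ^ uT T s := by
      rw [monomial_eq, Finsupp.prod_fintype _ _ (by simp)]
      simp
    rw [hmon]
    simp only [map_mul, map_prod, map_pow]
    exact this.symm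

end Aux

/-- For even `n ≥ 4`, with `σ = (n-2)²/2`:
`x_{nn}^σ · p⁺_n = p_n` in `k[x]/J_n`. -/
theorem xnn_pow_mul_pplus_even (n : ℕ) (hn : 4 ≤ n) (heven : Even n)
    (k : Type*) [Field k] :
    X s(lastIdx n (by omega), lastIdx n (by omega)) ^ ((n - 2) ^ 2 / 2) *
        pplusEven n k - pn n k (by omega) ∈ Jideal n k := by
  obtain ⟨m, rfl⟩ : ∃ m, n = m + 1 := ⟨n - 1, by omega⟩
  have hm : Odd m := by
    rcases Nat.even_or_odd m with h | h
    · exact absurd heven (by simpa [Nat.even_add_one] using h)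
    · exact h
  exact main_aux hm k

end Veronese
end
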